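/- Let Σ = (Γ, σ) be a signed simple graph with Δ(Σ) even. Then χ'(Σ) ≤ Δ(Σ) + 1. -/

import Mathlib

open SimpleGraph

/-- The signed color set `M_n`: for `n = 2k+1` it is `{0, ±1, …, ±k}`,
and for `n = 2k` it is `{±1, …, ±k}`. -/
def Mset (n : ℕ) : Set ℤ :=
  {a : ℤ | 2 * a.natAbs ≤ n ∧ (a = 0 → Odd n)}

/-- An `n`-edge coloring of the signed graph `(G, σ)`: an assignment of colors from `Mset n`
to the incidences of `G` such that `γ(v,e) = -σ(e)·γ(w,e)` for each edge `e : vw`. -/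
structure SColoring {V : Type*} (G : SimpleGraph V) (σ : Sym2 V → ℤ) (n : ℕ) where
  col : V → Sym2 V → ℤ
  mem_colors : ∀ ⦃v w : V⦄, G.Adj v w → col v s(v, w) ∈ Mset n
  compat : ∀ ⦃v w : V⦄, G.Adj v w → col v s(v, w) = -σ s(v, w) * col w s(v, w)

namespace SColoring

variable {V : Type*} {G : SimpleGraph V} {σ : Sym2 V → ℤ} {n : ℕ}

/-- A coloring is proper if distinct edges incident to a common vertex receive
distinct colors at that vertex. -/
def Proper (c : SColoring G σ n) : Prop :=
  ∀ ⦃v w x : V⦄, G.Adj v w → G.Adj v x → w ≠ x → c.col v s(v, w) ≠ c.col v s(v, x)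

/-- A coloring is zero-free if the color `0` is never used. -/
def ZeroFree (c : SColoring G σ n) : Prop :=
  ∀ ⦃v w : V⦄, G.Adj v w → c.col v s(v, w) ≠ 0

/-- The color `a` is absent at the vertex `v` if no edge incident to `v` is
colored `a` at `v`. -/
def Absent (c : SColoring G σ n) (a : ℤ) (v : V) : Prop :=
  ∀ ⦃w : V⦄, G.Adj v w → c.col v s(v, w) ≠ a

end SColoring

/-!
Call a color `a` at a vertex `v` a place `(v, a)`. Joining `(v, α)` to `(v, β)` and `(v, -α)` to
`(v, -β)` at every vertex, and the two places of every colored edge, gives a graph of maximum degree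
two. So Kempe chains behave as for unsigned graphs, except that one chain may meet a vertex both in
the colors `α`, `β` and in `-α`, `-β`.

Remove a maximal matching from `Γ`; its edges will receive the color `0`. In the remaining graph the
vertices of full degree `n = Δ` are independent, and it suffices to color it with `±1, …, ±n/2`.
Color it edge by edge, always adding an edge `uh` such that no neighbor of `u` has full degree.
After switching, all edges at `u` are negative, so both ends of such an edge have the same color and
Vizing fans at `u` can be shifted. Let `β` be absent at `u`, and suppose `uh` cannot be colored. In
a coloring for which the fan starting at `h` and avoiding the color `-β` is smallest, chain
exchanges show that no color is absent at two vertices of the fan. But every vertex of the fan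
misses a color and `h` misses two, whereas each of these colors is `-β` or the color of one of the
fan edges other than `uh`, of which there are too few.
-/

section Relation

variable {V : Type*} {r : V → V → Prop} {x w : V}

theorem reflTransGen_avoiding_or_through (p : V) (h : Relation.ReflTransGen r x w) :
    Relation.ReflTransGen (fun a b ↦ b ≠ p ∧ r a b) x w ∨
      (∃ y, Relation.ReflTransGen (fun a b ↦ b ≠ p ∧ r a b) x y ∧ r y p) ∧
        Relation.ReflTransGen (fun a b ↦ b ≠ p ∧ r a b) p w := by
  induction h with
  | refl => exact .inl .refl
  | @tail b d _ hbd ih =>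
    by_cases hd : d = p
    · subst hd
      exact .inr ⟨ih.elim (fun h ↦ ⟨b, h, hbd⟩) And.left, .refl⟩
    · exact ih.imp (·.tail ⟨hd, hbd⟩) (.imp_right (·.tail ⟨hd, hbd⟩))

theorem eq_or_exists_head_avoiding (h : Relation.ReflTransGen r x w) :
    x = w ∨ ∃ v, r x v ∧ Relation.ReflTransGen (fun a b ↦ b ≠ v ∧ r a b) v w := by
  refine h.cases_head.imp_right fun ⟨v, hxv, hvw⟩ ↦ ⟨v, hxv, ?_⟩
  exact (reflTransGen_avoiding_or_through v hvw).elim id And.right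

theorem reflTransGen_within_reachable (h : Relation.ReflTransGen r x w) :
    Relation.ReflTransGen (fun a b ↦ Relation.ReflTransGen r x b ∧ r a b) x w := by
  induction h with
  | refl => exact .refl
  | tail hb hbd ih => exact ih.tail ⟨hb.tail hbd, hbd⟩

theorem reflTransGen_outside_reachable {y : V} (h : Relation.ReflTransGen r x w)
    (hw : ¬ Relation.ReflTransGen r y w) :
    Relation.ReflTransGen (fun a b ↦ ¬ Relation.ReflTransGen r y b ∧ r a b) x w := by
  induction h with
  | refl => exact .refl
  | tail _ hbd ih => exact (ih fun hb ↦ hw (hb.tail hbd)).tail ⟨hw, hbd⟩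

end Relation

section MaxDegreeTwo

variable {W : Type*} {K : SimpleGraph W} {p q r : W}

theorem neighborSet_subset_support_of_isPath (h2 : ∀ x, (K.neighborSet x).encard ≤ 2)
    (hp : (K.neighborSet p).Subsingleton) (hq : (K.neighborSet q).Subsingleton) (hpq : p ≠ q)
    {P : K.Walk p q} (hP : P.IsPath) {x : W} (hx : x ∈ P.support) :
    K.neighborSet x ⊆ {y | y ∈ P.support} := by
  have hnil : ¬ P.Nil := fun h ↦ hpq h.eq
  obtain ⟨i, rfl, hi⟩ := P.mem_support_iff_exists_getVert.1 hx
  rcases eq_or_ne i 0 with rfl | hi0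
  · intro y hy
    rw [P.getVert_zero] at hy
    exact hp hy (P.adj_snd hnil) ▸ P.getVert_mem_support 1
  rcases hi.eq_or_lt with rfl | hi
  · intro y hy
    rw [P.getVert_length] at hy
    exact hq hy (P.adj_penultimate hnil).symm ▸ P.getVert_mem_support _
  · have h := hP.ncard_neighborSet_toSubgraph_internal_eq_two hi0 hi
    have hfin := P.finite_neighborSet_toSubgraph (w := P.getVert i)
    rw [← hfin.eq_of_subset_of_encard_le (P.toSubgraph.neighborSet_subset _)
      ((h2 _).trans_eq (by rw [← hfin.cast_ncard_eq, h]; rfl))]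
    exact fun y hy ↦ P.mem_verts_toSubgraph.1 (P.toSubgraph.edge_vert hy.symm)

/-- A connected graph of maximum degree two is a path or a cycle, so it has at most two ends. -/
theorem eq_or_eq_or_eq_of_reachable_of_subsingleton_neighborSet
    (h2 : ∀ x, (K.neighborSet x).encard ≤ 2) (hp : (K.neighborSet p).Subsingleton)
    (hq : (K.neighborSet q).Subsingleton) (hr : (K.neighborSet r).Subsingleton)
    (hpq : K.Reachable p q) (hpr : K.Reachable p r) : p = q ∨ p = r ∨ q = r := by
  by_contra! hne
  obtain ⟨P, hP⟩ := hpq.exists_isPath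
  have hrP : r ∈ P.support := by
    rw [reachable_iff_reflTransGen] at hpr
    have hpq' := hne.1
    clear hr hne
    induction hpr with
    | refl => exact P.start_mem_support
    | tail _ hxy ih => exact neighborSet_subset_support_of_isPath h2 hp hq hpq' hP ih hxy
  obtain ⟨i, rfl, hi⟩ := P.mem_support_iff_exists_getVert.1 hrP
  have hi0 : i ≠ 0 := fun h ↦ hne.2.1 (by simp [h])
  have hil : i < P.length := lt_of_le_of_ne hi fun h ↦ hne.2.2 (by simp [h])
  have := (P.finite_neighborSet_toSubgraph (w := P.getVert i)).to_subtype
  have := Set.ncard_le_one_iff_subsingleton.2 (hr.anti (P.toSubgraph.neighborSet_subset _))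
  rw [hP.ncard_neighborSet_toSubgraph_internal_eq_two hi0 hil] at this
  omega

end MaxDegreeTwo

/-- For nonzero `α` and `β`, the odd involution of `ℤ` that swaps `α` with `β` and `-α` with `-β`;
it recolors Kempe chains in a signed graph. -/
def exchange (α β a : ℤ) : ℤ :=
  if a = α then β else if a = β then α else if a = -α then -β else if a = -β then -α else a

section Exchange

variable {α β a : ℤ} {n : ℕ}

theorem exchange_left : exchange α β α = β := if_pos rfl

theorem exchange_right : exchange α β β = α := by
  grind [exchange]

theorem exchange_of_ne (h₁ : a ≠ α) (h₂ : a ≠ β) (h₃ : a ≠ -α) (h₄ : a ≠ -β) :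
    exchange α β a = a := by
  simp [exchange, h₁, h₂, h₃, h₄]

theorem exchange_zero (hα : α ≠ 0) (hβ : β ≠ 0) : exchange α β 0 = 0 :=
  exchange_of_ne hα.symm hβ.symm (by simpa using hα) (by simpa using hβ)

theorem exchange_neg (hα : α ≠ 0) (hβ : β ≠ 0) (a : ℤ) :
    exchange α β (-a) = -exchange α β a := by
  unfold exchange
  split_ifs <;> omega

theorem exchange_involutive (hα : α ≠ 0) (hβ : β ≠ 0) : Function.Involutive (exchange α β) := by
  intro a
  unfold exchange
  split_ifs <;> omega

theorem exchange_mem_Mset (hα : α ∈ Mset n \ {0}) (hβ : β ∈ Mset n \ {0}) (ha : a ∈ Mset n) :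
    exchange α β a ∈ Mset n := by
  simp only [Mset, Set.mem_sdiff, Set.mem_ofPred_eq, Set.mem_singleton_iff] at *
  unfold exchange
  grind

end Exchange

theorem finite_Mset (n : ℕ) : (Mset n).Finite :=
  (Set.finite_Icc (-n : ℤ) n).subset fun a ha ↦ by
    have := ha.1
    simp only [Set.mem_Icc]
    omega

theorem ne_zero_of_mem_Mset {n : ℕ} (hn : Even n) {a : ℤ} (ha : a ∈ Mset n) : a ≠ 0 :=
  fun h ↦ Nat.not_odd_iff_even.2 hn (ha.2 h)

theorem ncard_Mset (n : ℕ) : (Mset n).ncard = n := by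
  rcases Nat.even_or_odd' n with ⟨k, rfl | rfl⟩
  · have h : Mset (2 * k) = ((Finset.Icc (-k : ℤ) k).erase 0 : Finset ℤ) := by
      ext a
      simp only [Mset, Set.mem_ofPred_eq, Finset.mem_coe, Finset.mem_erase, Finset.mem_Icc]
      grind
    rw [h, Set.ncard_coe_finset, Finset.card_erase_of_mem (by simp), Int.card_Icc]
    omega
  · have h : Mset (2 * k + 1) = (Finset.Icc (-k : ℤ) k : Finset ℤ) := by
      ext a
      simp only [Mset, Set.mem_ofPred_eq, Finset.mem_coe, Finset.mem_Icc]
      grind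
    rw [h, Set.ncard_coe_finset, Int.card_Icc]
    omega

section NeighborSet

variable {V : Type*} [Finite V] {G H : SimpleGraph V} {v w : V}

theorem ncard_neighborSet_mono (hle : H ≤ G) (v : V) :
    (H.neighborSet v).ncard ≤ (G.neighborSet v).ncard :=
  Set.ncard_le_ncard (fun _ hw ↦ hle hw) (Set.toFinite _)

theorem ncard_neighborSet_lt (hle : H ≤ G) (hG : G.Adj v w) (hH : ¬ H.Adj v w) :
    (H.neighborSet v).ncard < (G.neighborSet v).ncard :=
  Set.ncard_lt_ncard ⟨fun _ hw ↦ hle hw, fun hs ↦ hH (hs hG)⟩ (Set.toFinite _)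

theorem exists_maximal_matching (G : SimpleGraph V) :
    ∃ M ≤ G, (∀ v, (M.neighborSet v).Subsingleton) ∧ G.IsIndepSet {v | M.neighborSet v = ∅} := by
  obtain ⟨M, ⟨hMG, hM⟩, hmax⟩ := Set.Finite.exists_maximal
    (s := {M : SimpleGraph V | M ≤ G ∧ ∀ v, (M.neighborSet v).Subsingleton})
    (Set.toFinite _) ⟨⊥, bot_le, fun _ _ h ↦ h.elim⟩
  refine ⟨M, hMG, hM, fun v hv w hw hne hvw ↦ ?_⟩
  have hv : ∀ x, ¬ M.Adj v x := Set.eq_empty_iff_forall_notMem.1 hv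
  have hw : ∀ x, ¬ M.Adj w x := Set.eq_empty_iff_forall_notMem.1 hw
  have hle : M ⊔ SimpleGraph.edge v w ≤ M := by
    refine hmax ⟨sup_le hMG ((SimpleGraph.edge_le_iff G).2 (.inr hvw)), ?_⟩ le_sup_left
    intro a b hab d had
    have hMa : ∀ ⦃b⦄, M.Adj a b → ∀ ⦃d⦄, M.Adj a d → b = d := hM a
    simp only [SimpleGraph.mem_neighborSet, SimpleGraph.sup_adj, SimpleGraph.edge_adj] at hab had
    grind [SimpleGraph.adj_comm]
  exact hv w (hle (.inr ((SimpleGraph.edge_adj v w v w).2 ⟨.inl ⟨rfl, rfl⟩, hne⟩)))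

end NeighborSet

namespace SColoring

variable {V : Type*} {G H : SimpleGraph V} {σ : Sym2 V → ℤ} {n : ℕ}

/-- `(G, σ)` has a proper `n`-edge coloring, that is, its chromatic index is at most `n`. -/
def EdgeColorable (G : SimpleGraph V) (σ : Sym2 V → ℤ) (n : ℕ) : Prop :=
  ∃ c : SColoring G σ n, c.Proper

theorem Proper.eq_of_col_eq {c : SColoring G σ n} (hc : c.Proper) {v w x : V} (hw : G.Adj v w)
    (hx : G.Adj v x) (h : c.col v s(v, w) = c.col v s(v, x)) : w = x :=
  of_not_not fun hwx ↦ hc hw hx hwx h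

theorem compat_symm (c : SColoring G σ n) {v w : V} (h : G.Adj v w) :
    c.col w s(v, w) = -σ s(v, w) * c.col v s(v, w) := by
  simpa only [Sym2.eq_swap] using c.compat h.symm

/-- The restriction of a coloring to a subgraph. -/
def mono (c : SColoring G σ n) (h : H ≤ G) : SColoring H σ n where
  col := c.col
  mem_colors _ _ hvw := c.mem_colors (h hvw)
  compat _ _ hvw := c.compat (h hvw)

theorem Proper.mono {c : SColoring G σ n} (hc : c.Proper) (h : H ≤ G) : (c.mono h).Proper :=
  fun _ _ _ hw hx ↦ hc (h hw) (h hx)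

theorem Absent.mono {c : SColoring G σ n} {a : ℤ} {v : V} (ha : c.Absent a v) (h : H ≤ G) :
    (c.mono h).Absent a v :=
  fun _ hw ↦ ha (h hw)

section InsertEdge

variable {u h : V} {a : ℤ}

open Classical in
/-- The extension of a coloring to a negative edge, both of whose incidences get the color `a`. -/
noncomputable def insertEdge (c : SColoring (G.deleteEdges {s(u, h)}) σ n) (hσ : σ s(u, h) = -1)
    (ha : a ∈ Mset n) : SColoring G σ n where
  col v e := if e = s(u, h) then a else c.col v e
  mem_colors v w hvw := by
    split_ifs with e
    exacts [ha, c.mem_colors (by simp [hvw, e])]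
  compat v w hvw := by
    split_ifs with e
    exacts [by simp [e, hσ], c.compat (by simp [hvw, e])]

variable {c : SColoring (G.deleteEdges {s(u, h)}) σ n} {hσ : σ s(u, h) = -1} {ha : a ∈ Mset n}

theorem col_insertEdge_self (v : V) : (c.insertEdge hσ ha).col v s(u, h) = a :=
  if_pos rfl

theorem col_insertEdge_of_ne (v : V) {e : Sym2 V} (he : e ≠ s(u, h)) :
    (c.insertEdge hσ ha).col v e = c.col v e :=
  if_neg he

theorem Proper.insertEdge (hc : c.Proper) (hu : c.Absent a u) (hh : c.Absent a h) :
    (c.insertEdge hσ ha).Proper := by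
  have absent : ∀ {v w x : V}, s(v, w) = s(u, h) → G.Adj v x → w ≠ x → c.col v s(v, x) ≠ a := by
    intro v w x hvw hvx hwx
    have hvx' : (G.deleteEdges {s(u, h)}).Adj v x := by
      simp [hvx, ← hvw, hwx.symm, hvx.ne']
    rcases Sym2.eq_iff.1 hvw with ⟨rfl, rfl⟩ | ⟨rfl, rfl⟩
    exacts [hu hvx', hh hvx']
  intro v w x hw hx hwx
  by_cases e₁ : s(v, w) = s(u, h) <;> by_cases e₂ : s(v, x) = s(u, h)
  · exact absurd (Sym2.congr_right.1 (e₁.trans e₂.symm)) hwx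
  · rw [e₁, col_insertEdge_self, col_insertEdge_of_ne v e₂]
    exact (absent e₁ hx hwx).symm
  · rw [e₂, col_insertEdge_self, col_insertEdge_of_ne v e₁]
    exact absent e₂ hw hwx.symm
  · rw [col_insertEdge_of_ne v e₁, col_insertEdge_of_ne v e₂]
    exact hc (by simp [hw, e₁]) (by simp [hx, e₂]) hwx

end InsertEdge

theorem mul_mem_Mset (s : ℤˣ) {a : ℤ} (ha : a ∈ Mset n) : s * a ∈ Mset n := by
  simpa [Mset, Int.natAbs_mul] using ha

/-- The effect on a coloring of switching the signed graph `(G, σ)` at the vertices where `s` is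
`-1`. -/
def switch {σ' : Sym2 V → ℤ} (c : SColoring G σ n) (s : V → ℤˣ)
    (hs : ∀ ⦃v w⦄, G.Adj v w → σ' s(v, w) = s v * σ s(v, w) * s w) : SColoring G σ' n where
  col v e := s v * c.col v e
  mem_colors _ _ hvw := mul_mem_Mset _ (c.mem_colors hvw)
  compat v w hvw := by
    have hw : (s w * s w : ℤ) = 1 := congrArg Units.val (Int.units_mul_self (s w))
    rw [c.compat hvw, hs hvw]
    linear_combination (s v * σ s(v, w) * c.col w s(v, w)) * hw

theorem Proper.switch {σ' : Sym2 V → ℤ} {c : SColoring G σ n} (hc : c.Proper) (s : V → ℤˣ)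
    (hs : ∀ ⦃v w⦄, G.Adj v w → σ' s(v, w) = s v * σ s(v, w) * s w) : (c.switch s hs).Proper :=
  fun v _ _ hw hx hwx e ↦ hc hw hx hwx (mul_left_cancel₀ (s v).ne_zero e)

section Kempe

variable {c : SColoring H σ n} {α β : ℤ} {v w : V} {s : V × ℤ} {a : ℤ}

/-- The graph whose connected components are the Kempe chains for the pairs of colors `{α, β}` and
`{-α, -β}`. A vertex `(v, a)` stands for the place of color `a` at `v`, occupied or not: it is
joined to the place of the exchanged color at `v` and, if the edge `vw` has color `a` at `v` and
`b` at `w`, to `(w, b)`. -/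
def kempeGraph (c : SColoring H σ n) (α β : ℤ) : SimpleGraph (V × ℤ) :=
  SimpleGraph.fromRel fun p q ↦ (p.1 = q.1 ∧ q.2 = exchange α β p.2) ∨
    (H.Adj p.1 q.1 ∧ c.col p.1 s(p.1, q.1) = p.2 ∧ c.col q.1 s(p.1, q.1) = q.2)

theorem eq_or_adj_of_kempeGraph_adj (hα : α ≠ 0) (hβ : β ≠ 0) {p q : V × ℤ}
    (h : (c.kempeGraph α β).Adj p q) :
    q = (p.1, exchange α β p.2) ∨
      H.Adj p.1 q.1 ∧ c.col p.1 s(p.1, q.1) = p.2 ∧ c.col q.1 s(p.1, q.1) = q.2 := by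
  rcases ((SimpleGraph.fromRel_adj _ _ _).1 h).2 with (⟨h₁, h₂⟩ | h) | (⟨h₁, h₂⟩ | ⟨h₁, h₂, h₃⟩)
  · exact .inl (Prod.ext h₁.symm h₂)
  · exact .inr h
  · exact .inl (Prod.ext h₁ (by rw [h₂, exchange_involutive hα hβ]))
  · exact .inr ⟨h₁.symm, by rwa [Sym2.eq_swap], by rwa [Sym2.eq_swap]⟩

theorem kempeGraph_reachable_exchange :
    (c.kempeGraph α β).Reachable s (v, exchange α β a) ↔
      (c.kempeGraph α β).Reachable s (v, a) := by
  have key : (c.kempeGraph α β).Reachable (v, a) (v, exchange α β a) := by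
    by_cases ha : exchange α β a = a
    · rw [ha]
    · exact Adj.reachable ((SimpleGraph.fromRel_adj _ _ _).2
        ⟨fun h ↦ ha (congrArg Prod.snd h).symm, .inl (.inl ⟨rfl, rfl⟩)⟩)
  exact ⟨(·.trans key.symm), (·.trans key)⟩

theorem kempeGraph_reachable_left :
    (c.kempeGraph α β).Reachable s (v, α) ↔ (c.kempeGraph α β).Reachable s (v, β) := by
  rw [← kempeGraph_reachable_exchange, exchange_left]

theorem kempeGraph_reachable_neg_left (hα : α ≠ 0) (hβ : β ≠ 0) :
    (c.kempeGraph α β).Reachable s (v, -α) ↔ (c.kempeGraph α β).Reachable s (v, -β) := by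
  rw [← kempeGraph_reachable_exchange, exchange_neg hα hβ, exchange_left]

theorem kempeGraph_reachable_col (h : H.Adj v w) :
    (c.kempeGraph α β).Reachable s (v, c.col v s(v, w)) ↔
      (c.kempeGraph α β).Reachable s (w, c.col w s(v, w)) := by
  have key : (c.kempeGraph α β).Reachable (v, c.col v s(v, w)) (w, c.col w s(v, w)) :=
    Adj.reachable ((SimpleGraph.fromRel_adj _ _ _).2
      ⟨fun e ↦ h.ne (congrArg Prod.fst e), .inl (.inr ⟨h, rfl, rfl⟩)⟩)
  exact ⟨(·.trans key), (·.trans key.symm)⟩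

theorem Absent.subsingleton_neighborSet_kempeGraph (hα : α ≠ 0) (hβ : β ≠ 0)
    (ha : c.Absent a v) : ((c.kempeGraph α β).neighborSet (v, a)).Subsingleton := by
  have key : ∀ y ∈ (c.kempeGraph α β).neighborSet (v, a), y = (v, exchange α β a) :=
    fun y hy ↦ (eq_or_adj_of_kempeGraph_adj hα hβ hy).resolve_right fun h ↦ ha h.1 h.2.1
  exact fun x hx y hy ↦ (key x hx).trans (key y hy).symm

theorem Proper.encard_neighborSet_kempeGraph_le_two (hα : α ≠ 0) (hβ : β ≠ 0) (hc : c.Proper)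
    (p : V × ℤ) : ((c.kempeGraph α β).neighborSet p).encard ≤ 2 := by
  by_cases ha : c.Absent p.2 p.1
  · exact (Set.encard_le_one_iff_subsingleton.2
      (ha.subsingleton_neighborSet_kempeGraph hα hβ)).trans one_le_two
  simp only [Absent, not_forall, not_not] at ha
  obtain ⟨w, hw, hwp⟩ := ha
  refine (Set.encard_le_encard
    (t := {(p.1, exchange α β p.2), (w, c.col w s(p.1, w))}) fun y hy ↦ ?_).trans
    ((Set.encard_insert_le _ _).trans_eq (by rw [Set.encard_singleton]; rfl))
  refine (eq_or_adj_of_kempeGraph_adj hα hβ hy).imp_right fun ⟨h₁, h₂, h₃⟩ ↦ ?_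
  obtain rfl := hc.eq_of_col_eq hw h₁ (hwp.trans h₂.symm)
  exact Prod.ext rfl h₃.symm

theorem Proper.eq_or_eq_or_eq_of_absent (hα : α ≠ 0) (hβ : β ≠ 0) (hc : c.Proper)
    {p q r : V × ℤ} (hp : c.Absent p.2 p.1) (hq : c.Absent q.2 q.1) (hr : c.Absent r.2 r.1)
    (hpq : (c.kempeGraph α β).Reachable p q) (hpr : (c.kempeGraph α β).Reachable p r) :
    p = q ∨ p = r ∨ q = r :=
  eq_or_eq_or_eq_of_reachable_of_subsingleton_neighborSet
    (hc.encard_neighborSet_kempeGraph_le_two hα hβ) (hp.subsingleton_neighborSet_kempeGraph hα hβ)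
    (hq.subsingleton_neighborSet_kempeGraph hα hβ) (hr.subsingleton_neighborSet_kempeGraph hα hβ)
    hpq hpr

/-- The two colors of an edge are either both zero or equal up to sign. -/
theorem exchange_col (hα : α ≠ 0) (hβ : β ≠ 0) (c : SColoring H σ n) (h : H.Adj v w) :
    exchange α β (c.col v s(v, w)) = -σ s(v, w) * exchange α β (c.col w s(v, w)) := by
  have hv := c.compat h
  have hw := c.compat_symm h
  by_cases h0 : c.col w s(v, w) = 0
  · rw [h0, mul_zero] at hv
    rw [hv, h0, exchange_zero hα hβ, mul_zero]
  have hσ : σ s(v, w) * σ s(v, w) = 1 := by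
    refine mul_right_cancel₀ h0 ?_
    linear_combination σ s(v, w) * hv - hw
  rcases Int.isUnit_iff.1 (.of_mul_eq_one _ hσ) with e | e <;> rw [e] at hv ⊢ <;> rw [hv]
  · simpa using exchange_neg hα hβ _
  · simp

open Classical in
/-- The coloring obtained by exchanging the colors along the Kempe chain of `s`. -/
noncomputable def kempeSwap (c : SColoring H σ n) (hα : α ∈ Mset n \ {0}) (hβ : β ∈ Mset n \ {0})
    (s : V × ℤ) : SColoring H σ n where
  col v e := if (c.kempeGraph α β).Reachable s (v, c.col v e) then exchange α β (c.col v e)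
    else c.col v e
  mem_colors v w h := by
    split_ifs
    exacts [exchange_mem_Mset hα hβ (c.mem_colors h), c.mem_colors h]
  compat v w h := by
    rw [kempeGraph_reachable_col h]
    split_ifs
    exacts [exchange_col hα.2 hβ.2 c h, c.compat h]

variable {hα : α ∈ Mset n \ {0}} {hβ : β ∈ Mset n \ {0}}

theorem col_kempeSwap_of_reachable {e : Sym2 V}
    (h : (c.kempeGraph α β).Reachable s (v, c.col v e)) :
    (c.kempeSwap hα hβ s).col v e = exchange α β (c.col v e) :=
  if_pos h

theorem col_kempeSwap_of_reachable_imp {e : Sym2 V}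
    (h : (c.kempeGraph α β).Reachable s (v, c.col v e) → exchange α β (c.col v e) = c.col v e) :
    (c.kempeSwap hα hβ s).col v e = c.col v e := by
  simpa only [kempeSwap, ite_eq_right_iff] using h

theorem kempeGraph_reachable_col_kempeSwap {e : Sym2 V} :
    (c.kempeGraph α β).Reachable s (v, (c.kempeSwap hα hβ s).col v e) ↔
      (c.kempeGraph α β).Reachable s (v, c.col v e) := by
  by_cases h : (c.kempeGraph α β).Reachable s (v, c.col v e)
  · rw [col_kempeSwap_of_reachable h, kempeGraph_reachable_exchange]
  · rw [col_kempeSwap_of_reachable_imp fun h' ↦ absurd h' h]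

theorem Proper.kempeSwap (hc : c.Proper) : (c.kempeSwap hα hβ s).Proper := by
  intro v w x hw hx hwx e
  have hr := kempeGraph_reachable_col_kempeSwap (c := c) (hα := hα) (hβ := hβ) (s := s) (v := v)
    (e := s(v, w))
  rw [e, kempeGraph_reachable_col_kempeSwap] at hr
  refine hc hw hx hwx ?_
  by_cases h : (c.kempeGraph α β).Reachable s (v, c.col v s(v, w))
  · rw [col_kempeSwap_of_reachable h, col_kempeSwap_of_reachable (hr.2 h)] at e
    exact (exchange_involutive hα.2 hβ.2).injective e
  · rwa [col_kempeSwap_of_reachable_imp fun h' ↦ absurd h' h,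
      col_kempeSwap_of_reachable_imp fun h' ↦ absurd (hr.1 h') h] at e

theorem absent_kempeSwap_of_reachable (h : (c.kempeGraph α β).Reachable s (v, a)) :
    (c.kempeSwap hα hβ s).Absent a v ↔ c.Absent (exchange α β a) v := by
  refine forall₂_congr fun w _ ↦ not_congr ?_
  have hinv := exchange_involutive hα.2 hβ.2
  by_cases hr : (c.kempeGraph α β).Reachable s (v, c.col v s(v, w))
  · rw [col_kempeSwap_of_reachable hr, hinv.eq_iff]
  · refine iff_of_false (fun e ↦ hr ?_) fun e ↦ hr ?_
    · rwa [← kempeGraph_reachable_col_kempeSwap (hα := hα) (hβ := hβ), e]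
    · rwa [e, kempeGraph_reachable_exchange]

theorem absent_kempeSwap_of_reachable_imp
    (h : (c.kempeGraph α β).Reachable s (v, a) → exchange α β a = a) :
    (c.kempeSwap hα hβ s).Absent a v ↔ c.Absent a v := by
  by_cases hr : (c.kempeGraph α β).Reachable s (v, a)
  · rw [absent_kempeSwap_of_reachable hr, h hr]
  refine forall₂_congr fun w _ ↦ not_congr ⟨fun e ↦ ?_, fun e ↦ ?_⟩
  · rw [← e, kempeGraph_reachable_col_kempeSwap] at hr
    rwa [col_kempeSwap_of_reachable_imp fun h' ↦ absurd h' hr] at e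
  · rwa [col_kempeSwap_of_reachable_imp fun h' ↦ absurd (e ▸ h') hr]

theorem absent_kempeSwap_right (h : (c.kempeGraph α β).Reachable s (v, α)) :
    (c.kempeSwap hα hβ s).Absent β v ↔ c.Absent α v := by
  rw [absent_kempeSwap_of_reachable (kempeGraph_reachable_left.1 h), exchange_right]

end Kempe

section Fan

variable {u h v w x : V}

theorem adj_deleteEdges_left :
    (G.deleteEdges {s(u, h)}).Adj u w ↔ G.Adj u w ∧ w ≠ h := by
  rw [SimpleGraph.deleteEdges_adj, Set.mem_singleton_iff, Sym2.congr_right]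

/-- In a fan at `u`, a vertex `x` may be followed by a neighbor `y` of `u` such that the color of
`uy` at `u` is absent at `x`. -/
def FanStep (c : SColoring H σ n) (u x y : V) : Prop :=
  H.Adj u y ∧ c.Absent (c.col u s(u, y)) x

/-- `w` is reached from `x` by a fan at `u` whose vertices after `x` lie in `A`. -/
def FanReach (c : SColoring H σ n) (u : V) (A : Set V) : V → V → Prop :=
  Relation.ReflTransGen fun x y ↦ y ∈ A ∧ c.FanStep u x y

theorem FanReach.mono {c : SColoring H σ n} {A B : Set V} (hw : c.FanReach u A x w)
    (hAB : ∀ y ∈ A, H.Adj u y → y ∈ B) : c.FanReach u B x w :=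
  Relation.ReflTransGen.mono (fun _ y h ↦ ⟨hAB y h.1 h.2.1, h.2⟩) _ _ hw

theorem FanReach.adj {c : SColoring (G.deleteEdges {s(u, h)}) σ n} {A : Set V}
    (hw : c.FanReach u A h w) (huh : G.Adj u h) : G.Adj u w := by
  rcases Relation.ReflTransGen.cases_tail hw with rfl | ⟨_, _, _, hs⟩
  exacts [huh, (adj_deleteEdges_left.1 hs.1).1]

/-- `c'` arises from `c` by shifting colors among the edges from `u` to `h` and to `A`, which moves
the uncolored edge from `uh` to `uw`. -/
structure IsShift (A : Set V) (c : SColoring (G.deleteEdges {s(u, h)}) σ n)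
    (c' : SColoring (G.deleteEdges {s(u, w)}) σ n) : Prop where
  proper : c'.Proper
  mem : w ∈ insert h A
  absent : ∀ ⦃x a⦄, x = u ∨ x = w ∨ x ∉ insert h A → c.Absent a x → c'.Absent a x
  col_eq : ∀ ⦃x e⦄, (∀ y ∈ insert h A, e ≠ s(u, y)) → c'.col x e = c.col x e

theorem IsShift.col_center {A : Set V} {c : SColoring (G.deleteEdges {s(u, h)}) σ n}
    {c' : SColoring (G.deleteEdges {s(u, w)}) σ n} (hs : IsShift A c c') (hx : x ∉ insert h A) :
    c'.col u s(u, x) = c.col u s(u, x) :=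
  hs.col_eq fun _ hy e ↦ hx (Sym2.congr_right.1 e ▸ hy)

theorem IsShift.trans {A : Set V} {c : SColoring (G.deleteEdges {s(u, h)}) σ n}
    {c₁ : SColoring (G.deleteEdges {s(u, v)}) σ n} {c₂ : SColoring (G.deleteEdges {s(u, w)}) σ n}
    (h₁ : IsShift {v} c c₁) (h₂ : IsShift (A \ {v}) c₁ c₂) (hv : v ∈ A) (hw : w = v ∨ w ≠ h) :
    IsShift A c c₂ := by
  have hA : insert v (A \ {v}) = A := by simpa using Set.insert_eq_of_mem hv
  obtain ⟨-, -, absent₁, col_eq₁⟩ := h₁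
  obtain ⟨proper, mem, absent₂, col_eq₂⟩ := h₂
  rw [hA] at mem absent₂ col_eq₂
  refine ⟨proper, .inr mem, fun x a hx ha ↦ absent₂ ?_ (absent₁ ?_ ha), fun x e he ↦ ?_⟩
  · exact hx.imp_right (.imp_right (mt .inr))
  · rcases hx with hx | rfl | hx
    · exact .inl hx
    · grind
    · exact .inr (.inr fun hx' ↦ hx (Set.insert_subset_insert (by simpa using hv) hx'))
  · rw [col_eq₂ fun y hy ↦ he y (.inr hy), col_eq₁ fun y hy ↦ he y ?_]
    exact Set.insert_subset_insert (by simpa using hv) hy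

theorem IsShift.fanReach {A B : Set V} {c : SColoring (G.deleteEdges {s(u, h)}) σ n}
    {c' : SColoring (G.deleteEdges {s(u, v)}) σ n} (hs : IsShift A c c') (hB : Disjoint B A)
    (hw : c.FanReach u B v w) :
    c'.FanReach u B v w ∧ (w = v ∨ w ∉ insert h A) := by
  induction hw with
  | refl => exact ⟨.refl, .inl rfl⟩
  | @tail x y _ hxy ih =>
    obtain ⟨hyB, huy, hx⟩ := hxy
    obtain ⟨huy, hyh⟩ := adj_deleteEdges_left.1 huy
    have hy : y ∉ insert h A := by simp [hyh, hB.notMem_of_mem_left hyB]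
    refine ⟨ih.1.tail ⟨hyB, adj_deleteEdges_left.2 ⟨huy, fun e ↦ hy (e ▸ hs.mem)⟩, ?_⟩, .inr hy⟩
    rw [hs.col_center hy]
    exact hs.absent (.inr ih.2) hx

theorem FanStep.exists_isShift {c : SColoring (G.deleteEdges {s(u, h)}) σ n} (hc : c.Proper)
    (huh : G.Adj u h) (hσ : σ s(u, h) = -1) (hv : c.FanStep u h v) :
    ∃ c' : SColoring (G.deleteEdges {s(u, v)}) σ n, IsShift {v} c c' := by
  have hle : (G.deleteEdges {s(u, v)}).deleteEdges {s(u, h)} ≤ G.deleteEdges {s(u, h)} :=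
    SimpleGraph.deleteEdges_mono (SimpleGraph.deleteEdges_le _)
  have hu : (c.mono hle).Absent (c.col u s(u, v)) u := fun z hz e ↦
    (adj_deleteEdges_left.1 (adj_deleteEdges_left.1 hz).1).2 (hc.eq_of_col_eq (hle hz) hv.1 e)
  refine ⟨(c.mono hle).insertEdge hσ (c.mem_colors hv.1),
    (hc.mono hle).insertEdge hu (hv.2.mono hle), by simp, fun x a hx ha z hz ↦ ?_, fun x e he ↦ ?_⟩
  · have hxh : x ≠ h := by
      have := huh.ne
      have := (adj_deleteEdges_left.1 hv.1).2
      grind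
    by_cases e : s(x, z) = s(u, h)
    · obtain ⟨rfl, rfl⟩ := (Sym2.eq_iff.1 e).resolve_right fun e ↦ hxh e.1
      rw [col_insertEdge_self]
      exact ha hv.1
    · rw [col_insertEdge_of_ne _ e]
      exact ha (by simp [e, (SimpleGraph.deleteEdges_adj.1 hz).1])
  · exact col_insertEdge_of_ne _ (he h (by simp))

theorem FanReach.exists_isShift [Finite V] {A : Set V}
    {c : SColoring (G.deleteEdges {s(u, h)}) σ n} (hc : c.Proper) (huh : G.Adj u h)
    (hσ : ∀ w, G.Adj u w → σ s(u, w) = -1) (hw : c.FanReach u A h w) :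
    ∃ c' : SColoring (G.deleteEdges {s(u, w)}) σ n, IsShift A c c' := by
  induction A using WellFoundedLT.induction generalizing h with
  | ind A ih =>
  rcases eq_or_exists_head_avoiding hw with rfl | ⟨v, ⟨hvA, hv⟩, hvw⟩
  · exact ⟨c, hc, by simp, fun _ _ _ ↦ id, fun _ _ _ ↦ rfl⟩
  have huv := (adj_deleteEdges_left.1 hv.1).1
  obtain ⟨c₁, h₁⟩ := hv.exists_isShift hc huh (hσ h huh)
  have hvw' : c.FanReach u (A \ {v}) v w :=
    Relation.ReflTransGen.mono (fun _ y hy ↦ ⟨⟨hy.2.1, hy.1⟩, hy.2.2⟩) _ _ hvw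
  obtain ⟨hvw₁, hwh⟩ := h₁.fanReach disjoint_sdiff_self_left hvw'
  obtain ⟨c₂, h₂⟩ := ih (A \ {v}) (Set.sdiff_singleton_ssubset.2 hvA) h₁.proper huv hvw₁
  exact ⟨c₂, h₁.trans h₂ hvA (hwh.imp_right fun h e ↦ h (.inl e))⟩

end Fan

section Blocked

variable {u h v w x y : V} {α β γ : ℤ}

theorem FanStep.kempeSwap {c : SColoring H σ n} {hα : α ∈ Mset n \ {0}} {hβ : β ∈ Mset n \ {0}}
    {s : V × ℤ} (hxy : c.FanStep u x y)
    (hu : (c.kempeGraph α β).Reachable s (u, c.col u s(u, y)) →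
      exchange α β (c.col u s(u, y)) = c.col u s(u, y))
    (hx : (c.kempeGraph α β).Reachable s (x, c.col u s(u, y)) →
      exchange α β (c.col u s(u, y)) = c.col u s(u, y)) :
    (c.kempeSwap hα hβ s).FanStep u x y := by
  refine ⟨hxy.1, ?_⟩
  rw [col_kempeSwap_of_reachable_imp hu, absent_kempeSwap_of_reachable_imp hx]
  exact hxy.2

/-- The vertices `y` such that the color of `uy` at `u` is not in `F`. Only the neighbors `y` of `u`
matter, since a coloring takes arbitrary values off the edges. -/
def avoiding (c : SColoring H σ n) (u : V) (F : Set ℤ) : Set V :=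
  {y | c.col u s(u, y) ∉ F}

theorem mem_avoiding_pair {c : SColoring H σ n} {a b : ℤ} :
    y ∈ c.avoiding u {a, b} ↔ c.col u s(u, y) ≠ a ∧ c.col u s(u, y) ≠ b := by
  simp [avoiding]

/-- `β` is a nonzero color absent at `u` in a proper coloring of the graph without the edge `uh`,
where all edges at `u` are negative and the whole graph has no proper coloring. -/
structure IsBlocked (c : SColoring (G.deleteEdges {s(u, h)}) σ n) (β : ℤ) : Prop where
  proper : c.Proper
  adj : G.Adj u h
  sign : ∀ w, G.Adj u w → σ s(u, w) = -1
  not_edgeColorable : ¬ EdgeColorable G σ n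
  mem : β ∈ Mset n \ {0}
  absent : c.Absent β u

/-- The vertices of the fans at `u` starting from `h` that do not use the color `-β`. -/
def fan (c : SColoring (G.deleteEdges {s(u, h)}) σ n) (β : ℤ) : Set V :=
  {w | c.FanReach u (c.avoiding u {-β}) h w}

/-- Among the colorings blocked with the color `β`, the coloring `c` has a smallest fan. -/
def IsMinimallyBlocked (c : SColoring (G.deleteEdges {s(u, h)}) σ n) (β : ℤ) : Prop :=
  MinimalFor (fun c : SColoring (G.deleteEdges {s(u, h)}) σ n ↦ c.IsBlocked β)
    (fun c ↦ (c.fan β).ncard) c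

variable {c : SColoring (G.deleteEdges {s(u, h)}) σ n}

theorem IsBlocked.not_absent [Finite V] (hb : c.IsBlocked β) {A : Set V}
    (hw : c.FanReach u A h w) {a : ℤ} (ha : a ∈ Mset n) (hu : c.Absent a u) : ¬ c.Absent a w := by
  intro hwa
  obtain ⟨c', hs⟩ := hw.exists_isShift hb.proper hb.adj hb.sign
  exact hb.not_edgeColorable ⟨c'.insertEdge (hb.sign w (hw.adj hb.adj)) ha,
    hs.proper.insertEdge (hs.absent (.inl rfl) hu) (hs.absent (.inr (.inl rfl)) hwa)⟩

theorem IsBlocked.kempeSwap (hb : c.IsBlocked β) {hα : α ∈ Mset n \ {0}} {hβ : β ∈ Mset n \ {0}}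
    {s : V × ℤ} (hγ : γ ∈ Mset n \ {0}) (hu : (c.kempeSwap hα hβ s).Absent γ u) :
    (c.kempeSwap hα hβ s).IsBlocked γ :=
  { hb with proper := hb.proper.kempeSwap, mem := hγ, absent := hu }

theorem IsBlocked.eq_of_reachable (hb : c.IsBlocked β) (hα : α ≠ 0) {p q : V × ℤ}
    (hup : G.Adj u p.1) (huq : G.Adj u q.1) (hp : c.Absent p.2 p.1) (hq : c.Absent q.2 q.1)
    (h₁ : (c.kempeGraph α β).Reachable (u, β) p) (h₂ : (c.kempeGraph α β).Reachable (u, β) q) :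
    p = q := by
  rcases hb.proper.eq_or_eq_or_eq_of_absent hα hb.mem.2 hb.absent hp hq h₁ h₂ with rfl | rfl | h
  exacts [absurd rfl hup.ne, absurd rfl huq.ne, h]

theorem IsBlocked.reachable_of_fanReach [Finite V] (hb : c.IsBlocked β) (hα : α ∈ Mset n \ {0})
    (hv : c.FanReach u (c.avoiding u {-α, -β}) h v) (hvα : c.Absent α v) :
    (c.kempeGraph α β).Reachable (u, β) (v, α) := by
  by_contra hnr
  replace hnr := mt Reachable.symm hnr
  have hb' : (c.kempeSwap hα hb.mem (v, α)).IsBlocked β :=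
    hb.kempeSwap hb.mem ((absent_kempeSwap_of_reachable_imp fun h ↦ absurd h hnr).2 hb.absent)
  have hfan : ∀ x, c.FanReach u (c.avoiding u {-α, -β}) h x →
      (c.kempeSwap hα hb.mem (v, α)).FanReach u Set.univ h x := by
    intro x hx
    induction hx with
    | refl => exact .refl
    | @tail x y _ hxy ih =>
      obtain ⟨hy, hxy⟩ := hxy
      rw [mem_avoiding_pair] at hy
      refine ih.tail ⟨trivial, ?_⟩
      by_cases hyα : c.col u s(u, y) = α
      · refine hxy.kempeSwap (fun h ↦ ?_) fun h ↦ ?_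
        · rw [hyα, kempeGraph_reachable_left] at h
          exact absurd h hnr
        · rw [hyα] at h
          exact absurd ((absent_kempeSwap_right h).2 (hyα ▸ hxy.2))
            (hb'.not_absent ih hb.mem.1 hb'.absent)
      · have := exchange_of_ne hyα (hb.absent hxy.1) hy.1 hy.2
        exact hxy.kempeSwap (fun _ ↦ this) fun _ ↦ this
  exact hb'.not_absent (hfan v hv) hb.mem.1 hb'.absent ((absent_kempeSwap_right .rfl).2 hvα)

theorem FanReach.kempeSwap_center [Finite V] (hb : c.IsBlocked β) (hα : α ∈ Mset n \ {0})
    (hb' : (c.kempeSwap hα hb.mem (u, β)).IsBlocked α)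
    (hneg : ∀ x, x = u ∨ G.Adj u x ∧ c.Absent (-α) x →
      ¬ (c.kempeGraph α β).Reachable (u, β) (x, -α))
    (hx : c.FanReach u (c.avoiding u {-β}) h x) :
    (c.kempeSwap hα hb.mem (u, β)).FanReach u Set.univ h x := by
  induction hx with
  | refl => exact .refl
  | @tail x y hx hxy ih =>
    obtain ⟨hy, hxy⟩ := hxy
    refine ih.tail ⟨trivial, ?_⟩
    by_cases hyα : c.col u s(u, y) = α
    · refine ⟨hxy.1, ?_⟩
      rw [col_kempeSwap_of_reachable (by rw [hyα, kempeGraph_reachable_left]), hyα, exchange_left]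
      have hxα : c.Absent α x := hyα ▸ hxy.2
      refine (absent_kempeSwap_right ?_).2 hxα
      by_contra h
      exact hb'.not_absent ih hα.1 hb'.absent
        ((absent_kempeSwap_of_reachable_imp fun h' ↦ absurd h' h).2 hxα)
    by_cases hyα' : c.col u s(u, y) = -α
    · refine hxy.kempeSwap (fun h ↦ ?_) fun h ↦ ?_ <;> rw [hyα'] at h
      · exact absurd h (hneg u (.inl rfl))
      · exact absurd h (hneg x (.inr ⟨FanReach.adj hx hb.adj, hyα' ▸ hxy.2⟩))
    · have := exchange_of_ne hyα (hb.absent hxy.1) hyα' hy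
      exact hxy.kempeSwap (fun _ ↦ this) fun _ ↦ this

theorem IsBlocked.reachable_center_neg [Finite V] (hb : c.IsBlocked β) (hα : α ∈ Mset n \ {0})
    (hv : v ∈ c.fan β) (hvα : c.Absent α v) (huv : ¬ (c.kempeGraph α β).Reachable (u, β) (v, α))
    (hw : G.Adj u w) (hwα : c.Absent α w) (huw : (c.kempeGraph α β).Reachable (u, β) (w, α)) :
    (c.kempeGraph α β).Reachable (u, β) (u, -α) := by
  by_contra hneg
  have hb' : (c.kempeSwap hα hb.mem (u, β)).IsBlocked α := by
    refine hb.kempeSwap hα ((absent_kempeSwap_of_reachable (kempeGraph_reachable_left.2 .rfl)).2 ?_)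
    rw [exchange_left]
    exact hb.absent
  refine hb'.not_absent (FanReach.kempeSwap_center hb hα hb' ?_ hv) hα.1 hb'.absent
    ((absent_kempeSwap_of_reachable_imp fun h ↦ absurd h huv).2 hvα)
  rintro x (rfl | ⟨hux, hxα⟩) hr
  · exact hneg hr
  · have := congrArg Prod.snd (hb.eq_of_reachable hα.2 hw hux hwα hxα huw hr)
    exact hα.2 (self_eq_neg.1 this)

section SwapAway

variable {hα : α ∈ Mset n \ {0}} {hβ : β ∈ Mset n \ {0}}

theorem mem_fan_kempeSwap (hc : c.Proper)
    (hu : ∀ y, (G.deleteEdges {s(u, h)}).Adj u y →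
      (c.kempeSwap hα hβ (v, α)).col u s(u, y) = c.col u s(u, y))
    (hv : v ∈ c.fan β) (hvα : c.Absent α v) (hxβ : c.Absent (-β) x) (hαβ : α ≠ -β)
    (hvx : (c.kempeGraph α β).Reachable (v, α) (x, -β)) :
    v ∈ (c.kempeSwap hα hβ (v, α)).fan β := by
  suffices key : ∀ z, c.FanReach u (c.avoiding u {-β}) h z →
      z ∈ (c.kempeSwap hα hβ (v, α)).fan β ∨ v ∈ (c.kempeSwap hα hβ (v, α)).fan β from
    (key v hv).elim id id
  intro z hz
  induction hz with
  | refl => exact .inl .refl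
  | @tail z y _ hzy ih =>
    obtain ⟨hy, huy, hzy⟩ := hzy
    rcases ih with ih | ih
    swap
    · exact .inr ih
    by_cases hzv : z = v
    · exact .inr (hzv ▸ ih)
    refine .inl (Relation.ReflTransGen.tail ih ⟨?_, huy, ?_⟩)
    · simpa only [avoiding, Set.mem_ofPred_eq, hu y huy] using hy
    rw [hu y huy]
    refine (absent_kempeSwap_of_reachable_imp fun hr ↦ ?_).2 hzy
    rcases hc.eq_or_eq_or_eq_of_absent hα.2 hβ.2 hvα hxβ hzy hvx hr with e | e | e
    · exact absurd (congrArg Prod.snd e) hαβ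
    · exact absurd (congrArg Prod.fst e).symm hzv
    · exact absurd (congrArg Prod.snd e).symm hy

theorem col_kempeSwap_center (hb : c.IsBlocked β) {s : V × ℤ}
    (huβ : ¬ (c.kempeGraph α β).Reachable s (u, β))
    (huα : ¬ (c.kempeGraph α β).Reachable s (u, -α)) (hy : (G.deleteEdges {s(u, h)}).Adj u y) :
    (c.kempeSwap hα hβ s).col u s(u, y) = c.col u s(u, y) := by
  refine col_kempeSwap_of_reachable_imp fun hr ↦ exchange_of_ne ?_ (hb.absent hy) ?_ ?_ <;>
    intro e <;> rw [e] at hr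
  · exact huβ (kempeGraph_reachable_left.1 hr)
  · exact huα hr
  · exact huα ((kempeGraph_reachable_neg_left hα.2 hβ.2).2 hr)

theorem fan_kempeSwap_subset [Finite V] (hb : c.IsBlocked β)
    (hu : ∀ y, (G.deleteEdges {s(u, h)}).Adj u y →
      (c.kempeSwap hα hβ (v, α)).col u s(u, y) = c.col u s(u, y))
    (hv : v ∈ c.fan β) (hvα : c.Absent α v) (hv' : v ∉ (c.kempeSwap hα hβ (v, α)).fan β) :
    (c.kempeSwap hα hβ (v, α)).fan β ⊆ c.fan β := by
  intro x hx
  induction hx with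
  | refl => exact .refl
  | @tail x y _ hxy ih =>
    obtain ⟨hy, huy, hxy⟩ := hxy
    simp only [avoiding, Set.mem_ofPred_eq, hu y huy] at hy
    rw [hu y huy] at hxy
    refine Relation.ReflTransGen.tail ih ⟨hy, huy, ?_⟩
    refine (absent_kempeSwap_of_reachable_imp fun hr ↦ ?_).1 hxy
    rw [absent_kempeSwap_of_reachable hr] at hxy
    refine exchange_of_ne (fun hyα ↦ ?_) (hb.absent huy) (fun hyα ↦ ?_) hy
    · rw [hyα, exchange_left] at hxy
      exact hb.not_absent ih hβ.1 hb.absent hxy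
    · rw [hyα, exchange_neg hα.2 hβ.2, exchange_left] at hxy
      rw [hyα, kempeGraph_reachable_neg_left hα.2 hβ.2] at hr
      refine hv' (mem_fan_kempeSwap hb.proper hu hv hvα hxy (fun e ↦ ?_) hr)
      exact hb.absent huy (hyα.trans (neg_eq_iff_eq_neg.2 e))

end SwapAway

namespace IsMinimallyBlocked

variable [Finite V]

theorem reachable_or_reachable (hc : c.IsMinimallyBlocked β) (hα : α ∈ Mset n \ {0})
    (hv : v ∈ c.fan β) (hvα : c.Absent α v) :
    (c.kempeGraph α β).Reachable (v, α) (u, β) ∨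
      (c.kempeGraph α β).Reachable (v, α) (u, -α) := by
  by_contra! hnr
  have hb := hc.prop
  have hb' : (c.kempeSwap hα hb.mem (v, α)).IsBlocked β :=
    hb.kempeSwap hb.mem ((absent_kempeSwap_of_reachable_imp fun h ↦ absurd h hnr.1).2 hb.absent)
  have hv' : v ∉ (c.kempeSwap hα hb.mem (v, α)).fan β := fun h ↦
    hb'.not_absent h hb.mem.1 hb'.absent ((absent_kempeSwap_right .rfl).2 hvα)
  have hss : (c.kempeSwap hα hb.mem (v, α)).fan β ⊂ c.fan β :=
    ⟨fan_kempeSwap_subset hb (fun y ↦ col_kempeSwap_center hb hnr.1 hnr.2) hv hvα hv',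
      fun h ↦ hv' (h hv)⟩
  exact hc.not_lt hb' (Set.ncard_lt_ncard hss (Set.toFinite _))

theorem eq_of_fanReach (hc : c.IsMinimallyBlocked β) (hα : α ∈ Mset n \ {0}) (hv : v ∈ c.fan β)
    (hvα : c.Absent α v) (hw : c.FanReach u (c.avoiding u {-α, -β}) h w) (hwα : c.Absent α w) :
    v = w := by
  by_contra hvw
  have hb := hc.prop
  have hv₀ := FanReach.adj hv hb.adj
  have hw₀ := hw.adj hb.adj
  have huw := hb.reachable_of_fanReach hα hw hwα
  have huv : ¬ (c.kempeGraph α β).Reachable (u, β) (v, α) := fun huv ↦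
    hvw (congrArg Prod.fst (hb.eq_of_reachable hα.2 hv₀ hw₀ hvα hwα huv huw))
  have hvu := (hc.reachable_or_reachable hα hv hvα).resolve_left (mt Reachable.symm huv)
  exact huv ((hb.reachable_center_neg hα hv hvα huv hw₀ hwα huw).trans hvu.symm)

end IsMinimallyBlocked

theorem Proper.fanReach_or_through (hc : c.Proper) (hv : v ∈ c.fan β) (α : ℤ) :
    c.FanReach u (c.avoiding u {-α, -β}) h v ∨
      ∃ y p, c.FanReach u (c.avoiding u {-α, -β}) h y ∧ c.FanStep u y p ∧
        c.col u s(u, p) = -α ∧ c.FanReach u (c.avoiding u {-α, -β}) p v := by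
  by_cases hp : ∃ p, (G.deleteEdges {s(u, h)}).Adj u p ∧ c.col u s(u, p) = -α
  · obtain ⟨p, hup, hpα⟩ := hp
    have mono : ∀ {x y}, Relation.ReflTransGen
        (fun a b ↦ b ≠ p ∧ b ∈ c.avoiding u {-β} ∧ c.FanStep u a b) x y →
        c.FanReach u (c.avoiding u {-α, -β}) x y :=
      Relation.ReflTransGen.mono (fun a b ⟨hbp, hb, hab⟩ ↦ ⟨mem_avoiding_pair.2
        ⟨fun e ↦ hbp (hc.eq_of_col_eq hab.1 hup (e.trans hpα.symm)), hb⟩, hab⟩) _ _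
    exact (reflTransGen_avoiding_or_through p hv).imp mono
      fun ⟨⟨y, hy, hyp⟩, hpv⟩ ↦ ⟨y, p, mono hy, hyp.2, hpα, mono hpv⟩
  · exact .inl (FanReach.mono hv fun y hy huy ↦ mem_avoiding_pair.2 ⟨fun e ↦ hp ⟨y, huy, e⟩, hy⟩)

/-- Shifting along the fan up to its first use of the color `-α` turns the rest of that fan into a
fan that does not use `-α`. -/
theorem IsBlocked.exists_isBlocked_shift [Finite V] (hb : c.IsBlocked β) {p : V}
    (hy : c.FanReach u (c.avoiding u {-α, -β}) h y) (hyp : c.FanStep u y p)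
    (hpα : c.col u s(u, p) = -α) :
    ∃ c' : SColoring (G.deleteEdges {s(u, p)}) σ n, c'.IsBlocked β ∧
      ∀ v, ¬ c.FanReach u (c.avoiding u {-α, -β}) h v →
        c.FanReach u (c.avoiding u {-α, -β}) p v → c.Absent α v →
        c'.FanReach u (c'.avoiding u {-α, -β}) p v ∧ c'.Absent α v := by
  set Q : Set V := {x | c.FanReach u (c.avoiding u {-α, -β}) h x} with hQ
  have hy' : c.FanReach u (insert p Q) h y :=
    Relation.ReflTransGen.mono (fun _ b hb ↦ ⟨.inr hb.1, hb.2.2⟩) _ _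
      (reflTransGen_within_reachable hy)
  obtain ⟨c', hs⟩ := FanReach.exists_isShift hb.proper hb.adj hb.sign (hy'.tail ⟨.inl rfl, hyp⟩)
  refine ⟨c', { hb with
    proper := hs.proper
    adj := (adj_deleteEdges_left.1 hyp.1).1
    absent := hs.absent (.inl rfl) hb.absent }, fun v hv hpv hvα ↦ ?_⟩
  have hpv' : c.FanReach u (c.avoiding u {-α, -β} \ insert p Q) p v := by
    refine Relation.ReflTransGen.mono (fun _ b hb ↦ ⟨⟨hb.2.1, ?_⟩, hb.2.2⟩) _ _
      (reflTransGen_outside_reachable hpv hv)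
    rintro (rfl | hbQ)
    exacts [(mem_avoiding_pair.1 hb.2.1).1 hpα, hb.1 hbQ]
  obtain ⟨hpv₁, hv₁⟩ := hs.fanReach Set.disjoint_sdiff_left hpv'
  refine ⟨hpv₁.mono fun y hy _ ↦ ?_, hs.absent (.inr hv₁) hvα⟩
  have hyh : y ∉ insert h (insert p Q) := by
    rintro (rfl | hyQ)
    exacts [hy.2 (.inr .refl), hy.2 hyQ]
  simpa only [avoiding, Set.mem_ofPred_eq, hs.col_center hyh] using hy.1

theorem IsMinimallyBlocked.eq_of_mem_fan [Finite V] (hc : c.IsMinimallyBlocked β)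
    (hα : α ∈ Mset n \ {0}) (hv : v ∈ c.fan β) (hvα : c.Absent α v) (hw : w ∈ c.fan β)
    (hwα : c.Absent α w) : v = w := by
  have hb := hc.prop
  by_cases hvQ : c.FanReach u (c.avoiding u {-α, -β}) h v
  · exact (hc.eq_of_fanReach hα hw hwα hvQ hvα).symm
  by_cases hwQ : c.FanReach u (c.avoiding u {-α, -β}) h w
  · exact hc.eq_of_fanReach hα hv hvα hwQ hwα
  obtain ⟨y, p, hy, hyp, hpα, hpv⟩ := (hb.proper.fanReach_or_through hv α).resolve_left hvQ
  obtain ⟨_, q, _, hq, hqα, hpw⟩ := (hb.proper.fanReach_or_through hw α).resolve_left hwQ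
  obtain rfl : q = p := hb.proper.eq_of_col_eq hq.1 hyp.1 (hqα.trans hpα.symm)
  obtain ⟨c', hb', hshift⟩ := hb.exists_isBlocked_shift hy hyp hpα
  obtain ⟨hv', hvα'⟩ := hshift v hvQ hpv hvα
  obtain ⟨hw', hwα'⟩ := hshift w hwQ hpw hwα
  exact congrArg Prod.fst (hb'.eq_of_reachable hα.2 (hv'.adj hb'.adj) (hw'.adj hb'.adj) hvα' hwα'
    (hb'.reachable_of_fanReach hα hv' hvα') (hb'.reachable_of_fanReach hα hw' hwα'))

end Blocked

section Extension

variable {M : SimpleGraph V} {σ' : Sym2 V → ℤ} {u h w : V} {β a : ℤ}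

open Classical in
/-- The colors of `Mset n` that are absent at `w`. -/
noncomputable def missing (c : SColoring H σ n) (w : V) : Finset ℤ :=
  {a ∈ (finite_Mset n).toFinset | c.Absent a w}

theorem mem_missing {c : SColoring H σ n} : a ∈ c.missing w ↔ a ∈ Mset n ∧ c.Absent a w := by
  simp [missing]

theorem le_card_missing_add [Finite V] (c : SColoring H σ n) (w : V) :
    n ≤ (c.missing w).card + (H.neighborSet w).ncard := by
  have hsub : Mset n ⊆ c.missing w ∪ (fun x ↦ c.col w s(w, x)) '' H.neighborSet w := by
    intro a ha
    by_cases hw : c.Absent a w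
    · exact .inl (mem_missing.2 ⟨ha, hw⟩)
    · simp only [Absent, not_forall, not_not] at hw
      obtain ⟨x, hx, rfl⟩ := hw
      exact .inr ⟨x, hx, rfl⟩
  calc n = (Mset n).ncard := (ncard_Mset n).symm
    _ ≤ _ := Set.ncard_le_ncard hsub (Set.toFinite _)
    _ ≤ _ := Set.ncard_union_le _ _
    _ ≤ _ := add_le_add (Set.ncard_coe_finset _).le (Set.ncard_image_le (Set.toFinite _))

section Counting

variable [Finite V] {c : SColoring (G.deleteEdges {s(u, h)}) σ n}

theorem IsMinimallyBlocked.pairwiseDisjoint_missing (hc : c.IsMinimallyBlocked β) (hn : Even n) :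
    (c.fan β).PairwiseDisjoint c.missing := by
  refine fun v hv w hw hvw ↦ Finset.disjoint_left.2 fun a hav haw ↦ hvw ?_
  obtain ⟨ha, hav⟩ := mem_missing.1 hav
  exact hc.eq_of_mem_fan ⟨ha, ne_zero_of_mem_Mset hn ha⟩ hv hav hw (mem_missing.1 haw).2

theorem IsBlocked.missing_subset (hb : c.IsBlocked β) (hw : w ∈ c.fan β) :
    (c.missing w : Set ℤ) ⊆ insert (-β) ((fun x ↦ c.col u s(u, x)) '' (c.fan β \ {h})) := by
  intro a ha
  obtain ⟨ha, haw⟩ := mem_missing.1 ha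
  have hau : ¬ c.Absent a u := fun hau ↦ hb.not_absent hw ha hau haw
  simp only [Absent, not_forall, not_not] at hau
  obtain ⟨x, hx, rfl⟩ := hau
  refine or_iff_not_imp_left.2 fun hβ ↦ ⟨x, ⟨?_, (adj_deleteEdges_left.1 hx).2⟩, rfl⟩
  exact Relation.ReflTransGen.tail hw ⟨hβ, hx, haw⟩

theorem IsMinimallyBlocked.sum_card_missing_le (hc : c.IsMinimallyBlocked β) (hn : Even n) :
    ∑ w ∈ (c.fan β).toFinite.toFinset, (c.missing w).card ≤ (c.fan β).ncard := by
  have hdisj : ((c.fan β).toFinite.toFinset : Set V).PairwiseDisjoint c.missing := by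
    simpa using hc.pairwiseDisjoint_missing hn
  have hsub : (((c.fan β).toFinite.toFinset.biUnion c.missing : Finset ℤ) : Set ℤ) ⊆
      insert (-β) ((fun x ↦ c.col u s(u, x)) '' (c.fan β \ {h})) := by
    simpa using fun w hw ↦ hc.prop.missing_subset hw
  rw [← Finset.card_biUnion hdisj, ← Set.ncard_coe_finset]
  calc _ ≤ _ := Set.ncard_le_ncard hsub (Set.toFinite _)
    _ ≤ _ := Set.ncard_insert_le _ _
    _ ≤ (c.fan β \ {h}).ncard + 1 := by grw [Set.ncard_image_le (Set.toFinite _)]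
    _ = _ := Set.ncard_sdiff_singleton_add_one .refl (Set.toFinite _)

/-- Every vertex of the fan misses a color, and `h`, which lost the edge `uh`, misses two. -/
theorem IsBlocked.ncard_fan_lt_sum_card_missing (hb : c.IsBlocked β)
    (hdeg : ∀ w, G.Adj u w → (G.neighborSet w).ncard < n) :
    (c.fan β).ncard < ∑ w ∈ (c.fan β).toFinite.toFinset, (c.missing w).card := by
  have hle : G.deleteEdges {s(u, h)} ≤ G := SimpleGraph.deleteEdges_le _
  rw [Set.ncard_eq_toFinset_card _ (Set.toFinite _), Finset.card_eq_sum_ones]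
  refine Finset.sum_lt_sum (fun w hw ↦ ?_) ⟨h, by simpa using .refl, ?_⟩
  · have := c.le_card_missing_add w
    have := ncard_neighborSet_mono hle w
    have := hdeg w (FanReach.adj ((Set.Finite.mem_toFinset _).1 hw) hb.adj)
    omega
  · have := c.le_card_missing_add h
    have := ncard_neighborSet_lt hle hb.adj.symm (by simp [Sym2.eq_swap])
    have := hdeg h hb.adj
    omega

end Counting

theorem EdgeColorable.switch (hG : EdgeColorable G σ n) (s : V → ℤˣ)
    (hs : ∀ ⦃v w⦄, G.Adj v w → σ' s(v, w) = s v * σ s(v, w) * s w) : EdgeColorable G σ' n :=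
  let ⟨c, hc⟩ := hG
  ⟨c.switch s hs, hc.switch s hs⟩

theorem edgeColorable_of_deleteEdges_of_negative [Finite V] (hn : Even n) (huh : G.Adj u h)
    (hσ : ∀ w, G.Adj u w → σ s(u, w) = -1) (hu : (G.neighborSet u).ncard ≤ n)
    (hdeg : ∀ w, G.Adj u w → (G.neighborSet w).ncard < n)
    (hG : EdgeColorable (G.deleteEdges {s(u, h)}) σ n) : EdgeColorable G σ n := by
  by_contra hno
  obtain ⟨c₀, hc₀⟩ := hG
  obtain ⟨β, hβ⟩ : (c₀.missing u).Nonempty := by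
    have := c₀.le_card_missing_add u
    have := ncard_neighborSet_lt (SimpleGraph.deleteEdges_le {s(u, h)}) huh (by simp)
    exact Finset.card_pos.1 (by omega)
  obtain ⟨hβ, hβu⟩ := mem_missing.1 hβ
  have hb : c₀.IsBlocked β := ⟨hc₀, huh, hσ, hno, ⟨hβ, ne_zero_of_mem_Mset hn hβ⟩, hβu⟩
  obtain ⟨c, hc⟩ : ∃ c : SColoring (G.deleteEdges {s(u, h)}) σ n, c.IsMinimallyBlocked β :=
    exists_minimalFor_of_wellFoundedLT _ _ ⟨c₀, hb⟩
  exact (hc.sum_card_missing_le hn).not_gt (hc.prop.ncard_fan_lt_sum_card_missing hdeg)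

theorem edgeColorable_of_deleteEdges [Finite V] (hn : Even n) (huh : G.Adj u h)
    (hσ : ∀ w, G.Adj u w → σ s(u, w) = 1 ∨ σ s(u, w) = -1) (hu : (G.neighborSet u).ncard ≤ n)
    (hdeg : ∀ w, G.Adj u w → (G.neighborSet w).ncard < n)
    (hG : EdgeColorable (G.deleteEdges {s(u, h)}) σ n) : EdgeColorable G σ n := by
  classical
  let s : V → ℤˣ := fun w ↦ if G.Adj u w ∧ σ s(u, w) = 1 then -1 else 1
  let σ' : Sym2 V → ℤ := fun e ↦ ((e.map s).mul : ℤˣ) * σ e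
  have hσ' : ∀ v w, σ' s(v, w) = s v * σ s(v, w) * s w := fun v w ↦ by
    simp only [σ', Sym2.map_mk, Sym2.mul_mk]
    push_cast
    ring
  have hsu : s u = 1 := by simp [s]
  have hneg : ∀ w, G.Adj u w → σ' s(u, w) = -1 := fun w hw ↦ by
    rw [hσ', hsu]
    rcases hσ w hw with e | e <;> simp [s, hw, e]
  have hG' : EdgeColorable G σ' n :=
    edgeColorable_of_deleteEdges_of_negative hn huh hneg hu hdeg (hG.switch s fun v w _ ↦ hσ' v w)
  refine hG'.switch s fun v w _ ↦ ?_
  have hv : (s v * s v : ℤ) = 1 := congrArg Units.val (Int.units_mul_self (s v))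
  have hw : (s w * s w : ℤ) = 1 := congrArg Units.val (Int.units_mul_self (s w))
  rw [hσ']
  linear_combination -σ s(v, w) * hv - s v * s v * σ s(v, w) * hw

theorem exists_adj_forall_ncard_lt [Finite V] (hG : G ≠ ⊥)
    (hdeg : ∀ v, (G.neighborSet v).ncard ≤ n)
    (hind : G.IsIndepSet {v | (G.neighborSet v).ncard = n}) :
    ∃ u h, G.Adj u h ∧ ∀ w, G.Adj u w → (G.neighborSet w).ncard < n := by
  obtain ⟨a, b, hab⟩ := SimpleGraph.ne_bot_iff_exists_adj.1 hG
  have : Nonempty V := ⟨a⟩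
  obtain ⟨u, hu⟩ := Finite.exists_max fun v ↦ (G.neighborSet v).ncard
  obtain ⟨h, huh⟩ : (G.neighborSet u).Nonempty :=
    (Set.ncard_pos (Set.toFinite _)).1
      (((Set.ncard_pos (Set.toFinite _)).2 ⟨b, hab⟩).trans_le (hu a))
  refine ⟨u, h, huh, fun w huw ↦ (hdeg w).lt_of_ne fun hw ↦ ?_⟩
  exact hind ((hdeg u).antisymm (hw.symm.trans_le (hu w))) hw huw.ne huw

theorem edgeColorable_of_isIndepSet [Finite V] (hn : Even n)
    (hσ : ∀ e ∈ G.edgeSet, σ e = 1 ∨ σ e = -1) (hdeg : ∀ v, (G.neighborSet v).ncard ≤ n)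
    (hind : G.IsIndepSet {v | (G.neighborSet v).ncard = n}) : EdgeColorable G σ n := by
  induction G using WellFoundedLT.induction with
  | ind G ih =>
  rcases eq_or_ne G ⊥ with rfl | hG
  · exact ⟨⟨0, fun _ _ h ↦ h.elim, fun _ _ h ↦ h.elim⟩, fun _ _ _ h ↦ h.elim⟩
  obtain ⟨u, h, huh, hu⟩ := exists_adj_forall_ncard_lt hG hdeg hind
  have hle : G.deleteEdges {s(u, h)} ≤ G := SimpleGraph.deleteEdges_le _
  have hmono := ncard_neighborSet_mono hle
  have hlt : G.deleteEdges {s(u, h)} < G := hle.lt_of_not_ge fun hge ↦ by simpa using hge huh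
  refine edgeColorable_of_deleteEdges hn huh (fun w hw ↦ hσ _ hw) (hdeg u) hu
    (ih _ hlt (fun e he ↦ hσ e (SimpleGraph.edgeSet_mono hle he))
      (fun v ↦ (hmono v).trans (hdeg v)) fun v hv w hw hvw h ↦ ?_)
  exact hind ((hdeg v).antisymm (hv.symm.trans_le (hmono v)))
    ((hdeg w).antisymm (hw.symm.trans_le (hmono w))) hvw (hle h)

theorem edgeColorable_succ_of_sdiff (hn : Even n) (hM : ∀ v, (M.neighborSet v).Subsingleton)
    (hG : EdgeColorable (G \ M) σ n) : EdgeColorable G σ (n + 1) := by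
  classical
  obtain ⟨c, hc⟩ := hG
  have hc₀ : ∀ ⦃v w⦄, (G \ M).Adj v w → c.col v s(v, w) ≠ 0 := fun v w hvw ↦
    ne_zero_of_mem_Mset hn (c.mem_colors hvw)
  refine ⟨⟨fun v e ↦ if e ∈ M.edgeSet then 0 else c.col v e, fun v w hvw ↦ ?_, fun v w hvw ↦ ?_⟩,
    fun v w x hvw hvx hwx ↦ ?_⟩
  · split_ifs with hm
    · exact ⟨by simp, fun _ ↦ hn.add_one⟩
    · have := c.mem_colors (v := v) (w := w) ⟨hvw, hm⟩
      exact ⟨this.1.trans n.le_succ, fun _ ↦ hn.add_one⟩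
  · split_ifs with hm
    exacts [by simp, c.compat ⟨hvw, hm⟩]
  · dsimp only
    split_ifs with h₁ h₂ h₂
    · exact absurd (hM v h₁ h₂) hwx
    · exact (hc₀ ⟨hvx, h₂⟩).symm
    · exact hc₀ ⟨hvw, h₁⟩
    · exact hc ⟨hvw, h₁⟩ ⟨hvx, h₂⟩ hwx

end Extension

end SColoring

/-- If `Δ(Σ)` is even then `χ'(Σ) ≤ Δ(Σ) + 1`. -/
theorem chromaticIndex_le_of_even_maxDegree {V : Type*} [Fintype V] (G : SimpleGraph V)
    [DecidableRel G.Adj] (σ : Sym2 V → ℤ)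
    (hσ : ∀ e ∈ G.edgeSet, σ e = 1 ∨ σ e = -1)
    (hΔ : Even G.maxDegree) :
    ∃ n ≤ G.maxDegree + 1, ∃ c : SColoring G σ n, c.Proper := by
  have hdeg : ∀ v, (G.neighborSet v).ncard ≤ G.maxDegree := fun v ↦ by
    rw [Set.ncard_eq_toFinset_card']
    exact G.degree_le_maxDegree v
  obtain ⟨M, hMG, hM, hind⟩ := exists_maximal_matching G
  have hle : G \ M ≤ G := sdiff_le
  have hfull : {v | ((G \ M).neighborSet v).ncard = G.maxDegree} ⊆ {v | M.neighborSet v = ∅} :=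
    fun v hv ↦ Set.eq_empty_of_forall_notMem fun w hw ↦
      ((ncard_neighborSet_lt hle (hMG hw) fun h ↦ h.2 hw).trans_le (hdeg v)).ne hv
  have hcol : SColoring.EdgeColorable (G \ M) σ G.maxDegree :=
    SColoring.edgeColorable_of_isIndepSet hΔ (fun e he ↦ hσ e (SimpleGraph.edgeSet_mono hle he))
      (fun v ↦ (ncard_neighborSet_mono hle v).trans (hdeg v))
      ((hind.mono hfull).imp fun _ _ h ↦ mt (@hle _ _) h)
  exact ⟨_, le_rfl, SColoring.edgeColorable_succ_of_sdiff hΔ hM hcol⟩
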